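/- Fourth-order three-body error term (paper eq. A18a): for pairwise distinct indices i, j, k and any phase-space point (x,p) with r_ij ≠ 0 and r_ik ≠ 0, the left-nested canonical Poisson bracket satisfies {{{{V_ij, T}, T}, T}, V_ik}(x,p) = −9 (G² (m i)(m j)(m k) / (r_ij⁷ r_ik³)) · ( (x_ij · x_ik) [ 5 (v_ij · x_ij)² − r_ij² ‖v_ij‖² ] − 2 r_ij² (x_ij · v_ij)(x_ik · v_ij) ). -/

import Mathlib

open scoped RealInnerProductSpace BigOperators

noncomputable section

/-- Three-dimensional Euclidean space. -/
abbrev E3 : Type := EuclideanSpace ℝ (Fin 3)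

/-- Phase space for `N` particles: positions and momenta. -/
abbrev Phase (N : ℕ) : Type := (Fin N → E3) × (Fin N → E3)

/-- Gradient of a phase-space function with respect to the `k`-th position. -/
def gradPos {N : ℕ} (A : Phase N → ℝ) (k : Fin N) (w : Phase N) : E3 :=
  gradient (fun y => A (Function.update w.1 k y, w.2)) (w.1 k)

/-- Gradient of a phase-space function with respect to the `k`-th momentum. -/
def gradMom {N : ℕ} (A : Phase N → ℝ) (k : Fin N) (w : Phase N) : E3 :=
  gradient (fun y => A (w.1, Function.update w.2 k y)) (w.2 k)

/-- Canonical Poisson bracket of two phase-space functions. -/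
def poisson {N : ℕ} (A B : Phase N → ℝ) (w : Phase N) : ℝ :=
  ∑ k, (⟪gradPos A k w, gradMom B k w⟫ - ⟪gradMom A k w, gradPos B k w⟫)

/-- Kinetic energy `T = Σ_i ‖p_i‖²/(2 m_i)`. -/
def kinetic {N : ℕ} (m : Fin N → ℝ) (w : Phase N) : ℝ :=
  ∑ i, ‖w.2 i‖ ^ 2 / (2 * m i)

/-- Pair potential `V_ij = −G m_i m_j / ‖x_i − x_j‖`. -/
def pairPot {N : ℕ} (G : ℝ) (m : Fin N → ℝ) (i j : Fin N) (w : Phase N) : ℝ :=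
  -(G * m i * m j) / ‖w.1 i - w.1 j‖

lemma fderiv_congr {f g : E3 → ℝ} {f' g' : E3 →L[ℝ] ℝ} {x : E3} (h : HasFDerivAt f f' x)
    (h1 : ∀ y, g y = f y) (h2 : ∀ u, g' u = f' u) : HasFDerivAt g g' x := by
  have e1 : g = f := funext h1
  have e2 : g' = f' := ContinuousLinearMap.ext h2
  rw [e1, e2]; exact h

lemma gradient_of {f h : E3 → ℝ} {f' : E3 →L[ℝ] ℝ} {g x : E3} (hf : HasFDerivAt f f' x)
    (h1 : ∀ y, h y = f y) (h2 : ∀ u, ⟪g, u⟫ = f' u) : HasGradientAt h g x := by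
  rw [hasGradientAt_iff_hasFDerivAt]
  exact fderiv_congr hf h1 (fun u => by rw [InnerProductSpace.toDual_apply_apply]; exact h2 u)

lemma hasFDerivAt_inv_norm_pow (n : ℕ) (x : E3) (hx : x ≠ 0) :
    HasFDerivAt (fun y : E3 => (‖y‖ ^ n)⁻¹)
      ((-(n : ℝ) * (‖x‖ ^ (n + 2))⁻¹) • innerSL ℝ x) x := by
  have hx' : ‖x‖ ≠ 0 := norm_ne_zero_iff.mpr hx
  have h1 : HasFDerivAt (fun y : E3 => ‖y‖ ^ 2) (2 • innerSL ℝ x) x :=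
    (hasStrictFDerivAt_norm_sq x).hasFDerivAt
  have h2 : HasFDerivAt (fun y : E3 => ‖y‖) (‖x‖⁻¹ • innerSL ℝ x) x := by
    have h3 := h1.sqrt (by positivity)
    have e : (fun y : E3 => √(‖y‖ ^ 2)) = fun y => ‖y‖ := by
      funext y; exact Real.sqrt_sq (norm_nonneg y)
    rw [e, Real.sqrt_sq (norm_nonneg x)] at h3
    refine fderiv_congr h3 (fun _ => rfl) fun u => ?_
    simp only [smul_apply, smul_eq_mul, nsmul_eq_mul]
    push_cast
    field_simp
  have h4 : HasDerivAt (fun r : ℝ => (r ^ n)⁻¹) (-(n * ‖x‖ ^ (n - 1)) / (‖x‖ ^ n) ^ 2) ‖x‖ :=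
    (hasDerivAt_pow n ‖x‖).fun_inv (pow_ne_zero _ hx')
  have h5 := h4.comp_hasFDerivAt x h2
  refine fderiv_congr h5 (fun _ => rfl) fun u => ?_
  simp only [smul_apply, smul_eq_mul]
  rcases n with _ | n
  · simp
  · simp only [Nat.add_sub_cancel]
    field_simp
    ring

lemma hasGradientAt_affine {f : E3 → ℝ} {g x : E3} (h : HasGradientAt f g x) (c : ℝ) (y0 : E3) :
    HasGradientAt (fun y => f (x + c • (y - y0))) (c • g) y0 := by
  rw [hasGradientAt_iff_hasFDerivAt] at h
  have h1 : HasFDerivAt (fun y : E3 => x + c • (y - y0)) (c • ContinuousLinearMap.id ℝ E3) y0 :=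
    (((hasFDerivAt_id y0).sub_const y0).const_smul c).const_add x
  have h2 : HasFDerivAt f ((InnerProductSpace.toDual ℝ E3) g) (x + c • (y0 - y0)) := by
    simpa using h
  have h3 := h2.comp y0 h1
  refine gradient_of h3 (fun _ => rfl) fun u => ?_
  simp [real_inner_smul_left]

/-- relative velocity -/
def relV {N : ℕ} (m : Fin N → ℝ) (i j : Fin N) (w : Phase N) : E3 :=
  (m i)⁻¹ • w.2 i - (m j)⁻¹ • w.2 j

def dl {N : ℕ} (i k : Fin N) : ℝ := if i = k then 1 else 0

lemma update_dl {N : ℕ} (q : Fin N → E3) (k i : Fin N) (y : E3) :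
    Function.update q k y i = q i + dl i k • (y - q k) := by
  unfold dl
  by_cases h : i = k
  · subst h; simp
  · simp [h]

lemma gradPos_eq {N : ℕ} {m : Fin N → ℝ} {i j : Fin N} {A : Phase N → ℝ} {F : E3 → E3 → ℝ}
    (hA : ∀ w : Phase N, w.1 i - w.1 j ≠ 0 → A w = F (w.1 i - w.1 j) (relV m i j w))
    (w : Phase N) (hw : w.1 i - w.1 j ≠ 0) {g : E3}
    (hF : HasGradientAt (fun x => F x (relV m i j w)) g (w.1 i - w.1 j)) (k : Fin N) :
    gradPos A k w = (dl i k - dl j k) • g := by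
  have h1 := hasGradientAt_affine hF (dl i k - dl j k) (w.1 k)
  unfold gradPos
  apply HasGradientAt.gradient
  refine HasGradientAt.congr_of_eventuallyEq h1 ?_
  have hc : ContinuousAt (fun y : E3 => w.1 i - w.1 j + (dl i k - dl j k) • (y - w.1 k)) (w.1 k) := by
    fun_prop
  have hne : ∀ᶠ y in nhds (w.1 k), w.1 i - w.1 j + (dl i k - dl j k) • (y - w.1 k) ≠ 0 :=
    hc.eventually_ne (by simpa using hw)
  filter_upwards [hne] with y hy
  have e : Function.update w.1 k y i - Function.update w.1 k y j
      = w.1 i - w.1 j + (dl i k - dl j k) • (y - w.1 k) := by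
    rw [update_dl, update_dl]; module
  have := hA (Function.update w.1 k y, w.2) (by simpa only [e] using hy)
  simp only [e] at this
  exact this

lemma gradMom_eq {N : ℕ} {m : Fin N → ℝ} {i j : Fin N} {A : Phase N → ℝ} {F : E3 → E3 → ℝ}
    (hA : ∀ w : Phase N, w.1 i - w.1 j ≠ 0 → A w = F (w.1 i - w.1 j) (relV m i j w))
    (w : Phase N) (hw : w.1 i - w.1 j ≠ 0) {g : E3}
    (hF : HasGradientAt (fun v => F (w.1 i - w.1 j) v) g (relV m i j w)) (k : Fin N) :
    gradMom A k w = ((m i)⁻¹ * dl i k - (m j)⁻¹ * dl j k) • g := by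
  have h1 := hasGradientAt_affine hF ((m i)⁻¹ * dl i k - (m j)⁻¹ * dl j k) (w.2 k)
  unfold gradMom
  apply HasGradientAt.gradient
  refine HasGradientAt.congr_of_eventuallyEq h1 (Filter.Eventually.of_forall fun y => ?_)
  have e : relV m i j (w.1, Function.update w.2 k y)
      = relV m i j w + ((m i)⁻¹ * dl i k - (m j)⁻¹ * dl j k) • (y - w.2 k) := by
    simp only [relV]
    rw [update_dl, update_dl]; module
  have := hA (w.1, Function.update w.2 k y) hw
  rw [e] at this
  exact this

lemma gradPos_kinetic {N : ℕ} (m : Fin N → ℝ) (k : Fin N) (w : Phase N) :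
    gradPos (kinetic m) k w = 0 := by
  unfold gradPos kinetic
  simp

lemma gradMom_kinetic {N : ℕ} (m : Fin N → ℝ) (hm : ∀ i, 0 < m i) (k : Fin N) (w : Phase N) :
    gradMom (kinetic m) k w = (m k)⁻¹ • w.2 k := by
  unfold gradMom
  apply HasGradientAt.gradient
  have e : (fun y => kinetic m (w.1, Function.update w.2 k y)) = fun y : E3 =>
      (2 * m k)⁻¹ * ‖y‖ ^ 2 + ∑ l ∈ Finset.univ.erase k, ‖w.2 l‖ ^ 2 / (2 * m l) := by
    funext y
    unfold kinetic
    rw [← Finset.add_sum_erase _ _ (Finset.mem_univ k)]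
    congr 1
    · simp; ring
    · refine Finset.sum_congr rfl fun l hl => ?_
      simp [Function.update_of_ne (Finset.ne_of_mem_erase hl)]
  rw [e]
  have h := (((hasStrictFDerivAt_norm_sq (w.2 k)).hasFDerivAt).const_mul (2 * m k)⁻¹).add_const
    (∑ l ∈ Finset.univ.erase k, ‖w.2 l‖ ^ 2 / (2 * m l))
  refine gradient_of h (fun _ => rfl) fun u => ?_
  have := (hm k).ne'
  simp [real_inner_smul_left]
  try field_simp

lemma poisson_kinetic {N : ℕ} {m : Fin N → ℝ} (hm : ∀ i, 0 < m i) {i j : Fin N}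
    {A : Phase N → ℝ} {F : E3 → E3 → ℝ}
    (hA : ∀ w : Phase N, w.1 i - w.1 j ≠ 0 → A w = F (w.1 i - w.1 j) (relV m i j w))
    (g : E3 → E3 → E3)
    (hF : ∀ x v, x ≠ 0 → HasGradientAt (fun x => F x v) (g x v) x)
    {F' : E3 → E3 → ℝ} (hF' : ∀ x v, x ≠ 0 → ⟪g x v, v⟫ = F' x v) :
    ∀ w : Phase N, w.1 i - w.1 j ≠ 0 →
      poisson A (kinetic m) w = F' (w.1 i - w.1 j) (relV m i j w) := by
  intro w hw
  rw [← hF' _ _ hw]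
  unfold poisson
  simp only [gradPos_kinetic, gradMom_kinetic m hm, gradPos_eq hA w hw (hF _ _ hw)]
  simp only [relV, dl, inner_zero_right, sub_zero, real_inner_smul_left, sub_mul, ite_mul,
    one_mul, zero_mul, Finset.sum_sub_distrib, Finset.sum_ite_eq, Finset.mem_univ, if_true,
    inner_sub_right]

lemma grad0 (K : ℝ) (x : E3) (hx : x ≠ 0) :
    HasGradientAt (fun x : E3 => -K / ‖x‖) ((K * (‖x‖ ^ 3)⁻¹) • x) x := by
  have h := (hasFDerivAt_inv_norm_pow 1 x hx).const_mul (-K)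
  refine gradient_of h (fun y => ?_) fun u => ?_
  · simp [div_eq_mul_inv]
  · simp [real_inner_smul_left]
    ring

lemma hasFDerivAt_innerR (x v : E3) :
    HasFDerivAt (fun x : E3 => ⟪x, v⟫) (innerSL ℝ v) x := by
  have h := (innerSL ℝ v).hasFDerivAt (x := x)
  exact fderiv_congr h (fun y => by simp [real_inner_comm]) fun u => rfl

lemma grad1 (K : ℝ) (x v : E3) (hx : x ≠ 0) :
    HasGradientAt (fun x : E3 => K * (⟪x, v⟫ * (‖x‖ ^ 3)⁻¹))
      (K • ((‖x‖ ^ 3)⁻¹ • v - (3 * ⟪x, v⟫ * (‖x‖ ^ 5)⁻¹) • x)) x := by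
  have h := ((hasFDerivAt_innerR x v).mul (hasFDerivAt_inv_norm_pow 3 x hx)).const_mul K
  refine gradient_of h (fun y => ?_) fun u => ?_
  · simp
  · simp [inner_sub_left, real_inner_smul_left]
    ring

lemma grad2 (K : ℝ) (x v : E3) (hx : x ≠ 0) :
    HasGradientAt (fun x : E3 => K * (‖v‖ ^ 2 * (‖x‖ ^ 3)⁻¹ - 3 * (⟪x, v⟫ ^ 2 * (‖x‖ ^ 5)⁻¹)))
      (K • ((-3 * ‖v‖ ^ 2 * (‖x‖ ^ 5)⁻¹ + 15 * ⟪x, v⟫ ^ 2 * (‖x‖ ^ 7)⁻¹) • x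
        - (6 * ⟪x, v⟫ * (‖x‖ ^ 5)⁻¹) • v)) x := by
  have h := (((hasFDerivAt_inv_norm_pow 3 x hx).const_mul (‖v‖ ^ 2)).sub
    ((((hasFDerivAt_innerR x v).pow 2).mul
      (hasFDerivAt_inv_norm_pow 5 x hx)).const_mul 3)).const_mul K
  refine gradient_of h (fun y => ?_) fun u => ?_
  · simp
  · simp [inner_sub_left, inner_add_left, real_inner_smul_left]
    left
    ring

lemma grad3 (K : ℝ) (x v : E3) :
    HasGradientAt (fun v : E3 => K * (-9 * (‖x‖ ^ 5)⁻¹ * (‖v‖ ^ 2 * ⟪v, x⟫)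
        + 15 * (‖x‖ ^ 7)⁻¹ * ⟪v, x⟫ ^ 3))
      (K • ((-9 * (‖x‖ ^ 5)⁻¹ * ‖v‖ ^ 2 + 45 * (‖x‖ ^ 7)⁻¹ * ⟪v, x⟫ ^ 2) • x
        - (18 * (‖x‖ ^ 5)⁻¹ * ⟪v, x⟫) • v)) v := by
  have h := (((((hasStrictFDerivAt_norm_sq v).hasFDerivAt).mul
      (hasFDerivAt_innerR v x)).const_mul (-9 * (‖x‖ ^ 5)⁻¹)).add
    (((hasFDerivAt_innerR v x).pow 3).const_mul (15 * (‖x‖ ^ 7)⁻¹))).const_mul K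
  refine gradient_of h (fun y => ?_) fun u => ?_
  · simp
  · simp [inner_sub_left, inner_add_left, real_inner_smul_left]
    ring

/-- Fourth-order three-body error term (paper eq. A18a):
`{{{{V_ij,T},T},T},V_ik} = −9 (G² m_i m_j m_k / (r_ij⁷ r_ik³))
  ((x_ij·x_ik)[5(v_ij·x_ij)² − r_ij² v_ij²] − 2 r_ij²(x_ij·v_ij)(x_ik·v_ij))`. -/
theorem fourth_order_VTTTV_three_body {N : ℕ} (G : ℝ) (hG : 0 < G)
    (m : Fin N → ℝ) (hm : ∀ i, 0 < m i) (i j k : Fin N)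
    (hij : i ≠ j) (hik : i ≠ k) (hjk : j ≠ k) (w : Phase N)
    (hrij : ‖w.1 i - w.1 j‖ ≠ 0) (hrik : ‖w.1 i - w.1 k‖ ≠ 0)
    (xij xik vij : E3)
    (hxij : xij = w.1 i - w.1 j) (hxik : xik = w.1 i - w.1 k)
    (hv : vij = (m i)⁻¹ • w.2 i - (m j)⁻¹ • w.2 j) :
    poisson (poisson (poisson (poisson (pairPot G m i j) (kinetic m))
        (kinetic m)) (kinetic m)) (pairPot G m i k) w =
      -9 * (G ^ 2 * m i * m j * m k / (‖xij‖ ^ 7 * ‖xik‖ ^ 3)) *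
        (⟪xij, xik⟫ * (5 * ⟪vij, xij⟫ ^ 2 - ‖xij‖ ^ 2 * ‖vij‖ ^ 2) -
          2 * ‖xij‖ ^ 2 * ⟪xij, vij⟫ * ⟪xik, vij⟫) := by
  have hx : w.1 i - w.1 j ≠ 0 := norm_ne_zero_iff.mp hrij
  have hy : w.1 i - w.1 k ≠ 0 := norm_ne_zero_iff.mp hrik
  have h0 : ∀ (a b : Fin N) (w : Phase N), w.1 a - w.1 b ≠ 0 → pairPot G m a b w =
      (fun x _ => -(G * m a * m b) / ‖x‖ : E3 → E3 → ℝ) (w.1 a - w.1 b) (relV m a b w) :=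
    fun a b w _ => rfl
  have h1 := poisson_kinetic hm (h0 i j) (fun x _ => (G * m i * m j * (‖x‖ ^ 3)⁻¹) • x)
    (fun x _ hx => grad0 _ x hx)
    (F' := fun x v => (G * m i * m j) * (⟪x, v⟫ * (‖x‖ ^ 3)⁻¹))
    (fun x v _ => by rw [real_inner_smul_left]; ring)
  have h2 := poisson_kinetic hm h1 _ (fun x v hx => grad1 _ x v hx)
    (F' := fun x v => (G * m i * m j) *
      (‖v‖ ^ 2 * (‖x‖ ^ 3)⁻¹ - 3 * (⟪x, v⟫ ^ 2 * (‖x‖ ^ 5)⁻¹)))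
    (fun x v _ => by
      simp only [real_inner_smul_left, inner_sub_left, real_inner_self_eq_norm_sq]; ring)
  have h3 := poisson_kinetic hm h2 _ (fun x v hx => grad2 _ x v hx)
    (F' := fun x v => (G * m i * m j) * (-9 * (‖x‖ ^ 5)⁻¹ * (‖v‖ ^ 2 * ⟪v, x⟫)
        + 15 * (‖x‖ ^ 7)⁻¹ * ⟪v, x⟫ ^ 3))
    (fun x v _ => by
      simp only [real_inner_smul_left, inner_sub_left, real_inner_self_eq_norm_sq,
        real_inner_comm x v]; ring)
  have hc : ∀ l, gradMom (pairPot G m i k) l w = 0 := by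
    intro l
    unfold gradMom pairPot
    simp
  have hd : ∀ l, gradMom (poisson (poisson (poisson (pairPot G m i j) (kinetic m))
        (kinetic m)) (kinetic m)) l w = _ :=
    fun l => gradMom_eq (F := fun x v => (G * m i * m j) * (-9 * (‖x‖ ^ 5)⁻¹ * (‖v‖ ^ 2 * ⟪v, x⟫)
        + 15 * (‖x‖ ^ 7)⁻¹ * ⟪v, x⟫ ^ 3)) h3 w hx (grad3 _ _ _) l
  have he : ∀ l, gradPos (pairPot G m i k) l w = _ :=
    fun l => gradPos_eq (m := m) (F := fun x _ => -(G * m i * m k) / ‖x‖) (h0 i k) w hy (grad0 _ _ hy) l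
  have hv' : relV m i j w = vij := hv.symm
  unfold poisson at hd ⊢
  simp only [hc, hd, he, hv', ← hxij, ← hxik]
  simp only [inner_zero_right, zero_sub, real_inner_smul_left, real_inner_smul_right,
    inner_sub_left]
  have hsum : ∀ c : ℝ, ∑ l, -(((m i)⁻¹ * dl i l - (m j)⁻¹ * dl j l) *
      ((dl i l - dl k l) * c)) = -((m i)⁻¹ * c) := by
    intro c
    rw [Finset.sum_eq_single i]
    · simp [dl, hij.symm, hik.symm]
    · intro l _ hl
      by_cases hjl : j = l
      · subst hjl; simp [dl, hij, hjk.symm]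
      · simp [dl, hl.symm, hjl]
    · simp
  have hmi := (hm i).ne'
  have hxn : ‖xij‖ ≠ 0 := by rw [hxij]; exact hrij
  have hyn : ‖xik‖ ≠ 0 := by rw [hxik]; exact hrik
  trans
  · refine Eq.trans (Finset.sum_congr rfl fun l _ => ?_) (hsum ((G * m i * m k * (‖xik‖ ^ 3)⁻¹) *
      ((G * m i * m j) * ((-9 * (‖xij‖ ^ 5)⁻¹ * ‖vij‖ ^ 2 + 45 * (‖xij‖ ^ 7)⁻¹ * ⟪vij, xij⟫ ^ 2)
       * ⟪xij, xik⟫ - (18 * (‖xij‖ ^ 5)⁻¹ * ⟪vij, xij⟫) * ⟪vij, xik⟫))))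
    ring
  · rw [real_inner_comm vij xij, real_inner_comm vij xik]
    field_simp
    ring
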